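/- Let T be an ergodic measure-preserving invertible transformation of a probability space (X, m), let f₀ ∈ L¹(X, m) be non-negative, and let ε₁ > 0 and δ₁ > 0. Then there exists N₀ ∈ ℕ such that for every N₁ ≥ N₀ and every measurable set B₁ for which the sets T¹B₁, …, T^{N₁}B₁ are pairwise disjoint and their union E₁ = ⨆_{i=1}^{N₁} TⁱB₁ has measure m(E₁) = ε₁, the set C₁ = X ∖ E₁ satisfies | ∫ f₀·𝟙_{C₁} dm − m(C₁) · ∫ f₀ dm | < δ₁. -/

import Mathlib

open MeasureTheory Filter Set

/-!
A function of the form `g ∘ T - g` telescopes: over a set `A` it integrates to the difference of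
the integrals of `g ∘ T` over `T ⁻¹' A` and over `A`, which is small when `A` is almost invariant.
In `L²` an element orthogonal to all such coboundaries is fixed by the isometry `g ↦ g ∘ T`, hence
constant by ergodicity, so coboundaries and constants span a dense subspace, and almost invariant
sets see the proportional share of every `L²`, hence of every integrable function. The complement
of a tower differs from its preimage by at most the base and the top level, each of measure at most
`1 / N`.
-/

open scoped Topology symmDiff ENNReal

section TowerCombinatorics

variable {X : Type*} {T : X → X}

/-- The union of the levels `T B, T² B, …, T ^ N B` over the base `B`; it is a Rokhlin–Halmos tower
of height `N` when the levels are pairwise disjoint. -/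
def tower (T : X → X) (N : ℕ) (B : Set X) : Set X :=
  ⋃ i ∈ Finset.Icc 1 N, T^[i] '' B

theorem preimage_image_iterate_succ (hT : T.Injective) (B : Set X) (i : ℕ) :
    T ⁻¹' (T^[i + 1] '' B) = T^[i] '' B := by
  rw [Function.iterate_succ', image_comp, preimage_image_eq _ hT]

theorem preimage_tower_symmDiff_tower_subset (hT : T.Injective) (N : ℕ) (B : Set X) :
    (T ⁻¹' tower T N B) ∆ tower T N B ⊆ B ∪ T^[N] '' B := by
  rintro x (⟨hx, hx'⟩ | ⟨hx, hx'⟩)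
  · obtain ⟨i, hi, hxi⟩ := mem_iUnion₂.1 hx
    obtain ⟨hi_pos, hiN⟩ := Finset.mem_Icc.1 hi
    obtain ⟨j, rfl⟩ := Nat.exists_eq_add_of_le' hi_pos
    rw [← mem_preimage, preimage_image_iterate_succ hT] at hxi
    obtain rfl | hj := j.eq_zero_or_pos
    · exact .inl (by simpa only [Function.iterate_zero, image_id] using hxi)
    · exact absurd (mem_iUnion₂.2 ⟨j, Finset.mem_Icc.2 ⟨hj, by omega⟩, hxi⟩) hx'
  · obtain ⟨i, hi, hxi⟩ := mem_iUnion₂.1 hx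
    obtain ⟨hi_pos, hiN⟩ := Finset.mem_Icc.1 hi
    obtain rfl | hi_lt := hiN.eq_or_lt
    · exact .inr hxi
    · rw [← preimage_image_iterate_succ hT] at hxi
      exact absurd (mem_iUnion₂.2 ⟨i + 1, Finset.mem_Icc.2 ⟨by omega, hi_lt⟩, hxi⟩) hx'

end TowerCombinatorics

section

variable {X E : Type*} [MeasurableSpace X] {μ : Measure X} {T : X → X} [NormedAddCommGroup E]

/-- The subspace of coboundaries `g ∘ T - g` with `g ∈ Lᵖ`. -/
def lpCoboundaries (𝕜 E : Type*) (p : ℝ≥0∞) [NormedRing 𝕜] [NormedAddCommGroup E] [Module 𝕜 E]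
    [IsBoundedSMul 𝕜 E] (hT : MeasurePreserving T μ μ) : Submodule 𝕜 (Lp E p μ) :=
  (Lp.compMeasurePreservingₗ 𝕜 T hT - LinearMap.id : Lp E p μ →ₗ[𝕜] Lp E p μ).range

theorem topologicalClosure_lpCoboundaries_sup_const_eq_top {𝕜 : Type*} [RCLike 𝕜]
    [InnerProductSpace 𝕜 E] [CompleteSpace E] [IsFiniteMeasure μ] (hT : Ergodic T μ) :
    (lpCoboundaries 𝕜 E 2 hT.toMeasurePreserving ⊔
      (Lp.constₗ 2 μ 𝕜).range).topologicalClosure = ⊤ := by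
  set U : Lp E 2 μ →ₗᵢ[𝕜] Lp E 2 μ := Lp.compMeasurePreservingₗᵢ 𝕜 T hT.toMeasurePreserving
  rw [Submodule.topologicalClosure_eq_top_iff, Submodule.eq_bot_iff]
  intro u hu
  rw [← Submodule.inf_orthogonal, Submodule.mem_inf] at hu
  obtain ⟨hu_coboundary, hu_const⟩ := hu
  have hUu : U u = u := by
    have hinner : inner 𝕜 (U u - u) u = 0 := hu_coboundary _ ⟨u, rfl⟩
    rw [inner_sub_left, sub_eq_zero] at hinner
    refine eq_of_norm_le_re_inner_eq_norm_sq (𝕜 := 𝕜) (U.norm_map u).le ?_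
    rw [hinner, inner_self_eq_norm_sq]
  obtain ⟨c, hc⟩ := hT.eq_const_of_compMeasurePreserving_eq (congrArg Subtype.val hUu)
  have hinner_self : inner 𝕜 u u = 0 := hu_const u ⟨c, Subtype.ext hc.symm⟩
  exact inner_self_eq_zero.1 hinner_self

/-- The filter of almost `T`-invariant measurable sets `A`, generated by the bounds
`μ ((T ⁻¹' A) ∆ A) < η`. -/
def almostInvariantSets (T : X → X) (μ : Measure X) : Filter (Set X) :=
  comap (fun A => μ ((T ⁻¹' A) ∆ A)) (𝓝 0) ⊓ 𝓟 {A | MeasurableSet A}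

theorem eventually_measurableSet_almostInvariantSets :
    ∀ᶠ A in almostInvariantSets T μ, MeasurableSet A :=
  mem_inf_of_right (mem_principal_self _)

theorem tendsto_measure_preimage_symmDiff_almostInvariantSets :
    Tendsto (fun A => μ ((T ⁻¹' A) ∆ A)) (almostInvariantSets T μ) (𝓝 0) :=
  tendsto_comap.mono_left inf_le_left

section Discrepancy

theorem integral_norm_le_norm_Lp [IsProbabilityMeasure μ] {p : ℝ≥0∞} [hp : Fact (1 ≤ p)]
    (u : Lp E p μ) : ∫ x, ‖u x‖ ∂μ ≤ ‖u‖ := by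
  rw [integral_norm_eq_lintegral_enorm (Lp.aestronglyMeasurable u),
    ← eLpNorm_one_eq_lintegral_enorm, Lp.norm_def]
  exact ENNReal.toReal_mono (Lp.eLpNorm_ne_top u)
    (eLpNorm_le_eLpNorm_of_exponent_le hp.out (Lp.aestronglyMeasurable u))

variable [NormedSpace ℝ E]

theorem setIntegral_sub_setIntegral_eq_sdiff {f : X → E} {s t : Set X} (hf : Integrable f μ)
    (hs : MeasurableSet s) (ht : MeasurableSet t) :
    ∫ x in s, f x ∂μ - ∫ x in t, f x ∂μ = ∫ x in s \ t, f x ∂μ - ∫ x in t \ s, f x ∂μ := by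
  rw [← integral_inter_add_sdiff ht hf.integrableOn,
    ← integral_inter_add_sdiff (s := t) hs hf.integrableOn, inter_comm t s, add_sub_add_left_eq_sub]

theorem setIntegral_preimage_comp {Y : Type*} [MeasurableSpace Y] {ν : Measure Y} {S : X → Y}
    (hS : MeasurePreserving S μ ν) {A : Set Y} (hA : MeasurableSet A) {g : Y → E}
    (hg : AEStronglyMeasurable g ν) :
    ∫ x in S ⁻¹' A, g (S x) ∂μ = ∫ y in A, g y ∂ν := by
  rw [← hS.map_eq] at hg
  rw [← setIntegral_map hA hg hS.aemeasurable, hS.map_eq]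

theorem tendsto_setIntegral_comp_sub_almostInvariantSets (hT : MeasurePreserving T μ μ)
    {g : X → E} (hg : Integrable g μ) :
    Tendsto (fun A => ∫ x in A, (g (T x) - g x) ∂μ) (almostInvariantSets T μ) (𝓝 0) := by
  have hgT : Integrable (fun x => g (T x)) μ := hT.integrable_comp_of_integrable hg
  have hsmall {S : Set X → Set X} (hS : ∀ A, S A ⊆ (T ⁻¹' A) ∆ A) :
      Tendsto (fun A => ∫ x in S A, g (T x) ∂μ) (almostInvariantSets T μ) (𝓝 0) :=
    hgT.tendsto_setIntegral_nhds_zero <|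
      tendsto_of_tendsto_of_tendsto_of_le_of_le tendsto_const_nhds
        tendsto_measure_preimage_symmDiff_almostInvariantSets
        (fun _ => zero_le) (fun A => measure_mono (hS A))
  have hdiff : Tendsto (fun A => ∫ x in A \ T ⁻¹' A, g (T x) ∂μ - ∫ x in T ⁻¹' A \ A, g (T x) ∂μ)
      (almostInvariantSets T μ) (𝓝 0) := by
    simpa only [sub_zero] using
      (hsmall (S := fun A => A \ T ⁻¹' A) fun _ => subset_union_right).sub
        (hsmall (S := fun A => T ⁻¹' A \ A) fun _ => subset_union_left)
  refine hdiff.congr' ?_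
  filter_upwards [eventually_measurableSet_almostInvariantSets] with A hA
  rw [integral_sub hgT.integrableOn hg.integrableOn,
    ← setIntegral_preimage_comp hT hA hg.aestronglyMeasurable,
    setIntegral_sub_setIntegral_eq_sdiff hgT hA (hT.measurable hA)]

/-- The discrepancy of `f` on `A`: the deviation of `∫ x in A, f x ∂μ` from the share of
`∫ x, f x ∂μ` proportional to the measure of `A`. -/
noncomputable def discrepancy (μ : Measure X) (A : Set X) (f : X → E) : E :=
  ∫ x in A, f x ∂μ - μ.real A • ∫ x, f x ∂μ

theorem discrepancy_congr_ae {A : Set X} {f g : X → E} (h : f =ᵐ[μ] g) :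
    discrepancy μ A f = discrepancy μ A g := by
  rw [discrepancy, discrepancy, integral_congr_ae h, integral_congr_ae (ae_restrict_of_ae h)]

theorem discrepancy_add {A : Set X} {f g : X → E} (hf : Integrable f μ) (hg : Integrable g μ) :
    discrepancy μ A (f + g) = discrepancy μ A f + discrepancy μ A g := by
  simp only [discrepancy, integral_add' hf hg, integral_add' hf.integrableOn hg.integrableOn,
    smul_add, add_sub_add_comm]

theorem discrepancy_sub {A : Set X} {f g : X → E} (hf : Integrable f μ) (hg : Integrable g μ) :
    discrepancy μ A (f - g) = discrepancy μ A f - discrepancy μ A g := by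
  simp only [discrepancy, integral_sub' hf hg, integral_sub' hf.integrableOn hg.integrableOn,
    smul_sub, sub_sub_sub_comm]

theorem discrepancy_comp_sub (hT : MeasurePreserving T μ μ) {A : Set X} {g : X → E}
    (hg : Integrable g μ) :
    discrepancy μ A (g ∘ T - g) = ∫ x in A, (g (T x) - g x) ∂μ := by
  have hmean : ∫ x, g (T x) ∂μ = ∫ x, g x ∂μ := by
    simpa only [preimage_univ, setIntegral_univ] using
      setIntegral_preimage_comp hT .univ hg.aestronglyMeasurable
  have htotal : ∫ x, (g ∘ T - g) x ∂μ = 0 := by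
    rw [integral_sub' (hT.integrable_comp_of_integrable hg) hg]
    exact sub_eq_zero.2 hmean
  rw [discrepancy, htotal, smul_zero, sub_zero]
  rfl

theorem discrepancy_smul_const [CompleteSpace E] {A : Set X} (φ : X → ℝ) (c : E) :
    discrepancy μ A (fun x => φ x • c) = discrepancy μ A φ • c := by
  simp only [discrepancy, integral_smul_const, smul_eq_mul, sub_smul, mul_smul]

variable [IsProbabilityMeasure μ]

theorem discrepancy_const [CompleteSpace E] {A : Set X} (c : E) :
    discrepancy μ A (fun _ => c) = 0 := by
  simp only [discrepancy, integral_const, measureReal_restrict_apply_univ, probReal_univ,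
    one_smul, sub_self]

theorem norm_discrepancy_le {A : Set X} {f : X → E} (hf : Integrable f μ) :
    ‖discrepancy μ A f‖ ≤ 2 * ∫ x, ‖f x‖ ∂μ := by
  have hset : ‖∫ x in A, f x ∂μ‖ ≤ ∫ x, ‖f x‖ ∂μ :=
    (norm_integral_le_integral_norm _).trans <|
      setIntegral_le_integral hf.norm (ae_of_all _ fun _ => norm_nonneg _)
  have hshare : ‖μ.real A • ∫ x, f x ∂μ‖ ≤ ∫ x, ‖f x‖ ∂μ := by
    rw [norm_smul, Real.norm_of_nonneg measureReal_nonneg]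
    exact (mul_le_of_le_one_left (norm_nonneg _) measureReal_le_one).trans
      (norm_integral_le_integral_norm _)
  exact (norm_sub_le _ _).trans (by linarith)

variable {p : ℝ≥0∞} [hp : Fact (1 ≤ p)]

theorem lipschitzWith_discrepancy_Lp (A : Set X) :
    LipschitzWith 2 fun u : Lp E p μ => discrepancy μ A u := by
  refine LipschitzWith.of_dist_le_mul fun u v => ?_
  have hint (w : Lp E p μ) : Integrable w μ := (Lp.memLp w).integrable hp.out
  rw [dist_eq_norm, dist_eq_norm, ← discrepancy_sub (hint u) (hint v),
    ← discrepancy_congr_ae (Lp.coeFn_sub u v)]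
  exact (norm_discrepancy_le (hint _)).trans
    (mul_le_mul_of_nonneg_left (integral_norm_le_norm_Lp _) zero_le_two)

theorem isClosed_setOf_tendsto_discrepancy_Lp (l : Filter (Set X)) :
    IsClosed {u : Lp E p μ | Tendsto (fun A => discrepancy μ A u) l (𝓝 0)} :=
  (LipschitzWith.uniformEquicontinuous _ 2 lipschitzWith_discrepancy_Lp).equicontinuous
    |>.isClosed_setOfPred_tendsto continuous_const

end Discrepancy

section Equidistribution

variable [IsProbabilityMeasure μ]

theorem tendsto_discrepancy_almostInvariantSets_of_memLp_two [InnerProductSpace ℝ E]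
    [CompleteSpace E] (hT : Ergodic T μ) {f : X → E} (hf : MemLp f 2 μ) :
    Tendsto (fun A => discrepancy μ A f) (almostInvariantSets T μ) (𝓝 0) := by
  have hTm := hT.toMeasurePreserving
  suffices h : ∀ u : Lp E 2 μ,
      Tendsto (fun A => discrepancy μ A u) (almostInvariantSets T μ) (𝓝 0) from
    (h (hf.toLp f)).congr fun A => discrepancy_congr_ae hf.coeFn_toLp
  intro u
  have hu := (topologicalClosure_lpCoboundaries_sup_const_eq_top (𝕜 := ℝ) (E := E) hT).ge
    (Submodule.mem_top (x := u))
  refine closure_minimal ?_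
    (isClosed_setOf_tendsto_discrepancy_Lp (almostInvariantSets T μ)) hu
  intro v hv
  obtain ⟨_, ⟨g, rfl⟩, _, ⟨c, rfl⟩, rfl⟩ := Submodule.mem_sup.1 hv
  have hg : Integrable g μ := (Lp.memLp g).integrable one_le_two
  have hgT : Integrable (g ∘ T) μ := hTm.integrable_comp_of_integrable hg
  have hv_ae : (Lp.compMeasurePreserving T hTm g - g + Lp.const 2 μ c : Lp E 2 μ) =ᵐ[μ]
      (g ∘ T - ⇑g) + fun _ => c :=
    (Lp.coeFn_add _ _).trans <|
      ((Lp.coeFn_sub _ _).trans ((Lp.coeFn_compMeasurePreserving g hTm).sub .rfl)).add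
        (Lp.coeFn_const 2 μ c)
  refine (tendsto_setIntegral_comp_sub_almostInvariantSets hTm hg).congr fun A => ?_
  refine Eq.trans ?_ (discrepancy_congr_ae hv_ae).symm
  rw [discrepancy_add (hgT.sub hg) (integrable_const c), discrepancy_const, add_zero,
    discrepancy_comp_sub hTm hg]

theorem tendsto_discrepancy_almostInvariantSets [NormedSpace ℝ E] [CompleteSpace E]
    (hT : Ergodic T μ) {f : X → E} (hf : Integrable f μ) :
    Tendsto (fun A => discrepancy μ A f) (almostInvariantSets T μ) (𝓝 0) := by
  refine Integrable.induction
    (fun f : X → E => Tendsto (fun A => discrepancy μ A f) (almostInvariantSets T μ) (𝓝 0))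
    ?indicator ?add (isClosed_setOf_tendsto_discrepancy_Lp _) ?congr hf
  case indicator =>
    intro c s hs _
    have hreal := tendsto_discrepancy_almostInvariantSets_of_memLp_two hT
      (memLp_indicator_const 2 hs (1 : ℝ) (.inr (measure_ne_top μ s)))
    have hsmul : s.indicator (fun _ => c) = fun x => s.indicator (fun _ => (1 : ℝ)) x • c := by
      simp only [← indicator_smul_const_apply, one_smul]
    simpa only [hsmul, discrepancy_smul_const, zero_smul] using hreal.smul_const c
  case add =>
    intro f g _ hf hg hf_tendsto hg_tendsto
    simpa only [discrepancy_add hf hg, add_zero] using hf_tendsto.add hg_tendsto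
  case congr =>
    intro f g hfg _ hf_tendsto
    exact hf_tendsto.congr fun A => discrepancy_congr_ae hfg

end Equidistribution

section Tower

theorem measurableSet_image_iterate (hT : MeasurableEmbedding T) {B : Set X}
    (hB : MeasurableSet B) (i : ℕ) : MeasurableSet (T^[i] '' B) := by
  induction i with
  | zero => simpa only [Function.iterate_zero, image_id] using hB
  | succ i ih => rw [Function.iterate_succ', image_comp]; exact hT.measurableSet_image.2 ih

theorem measurableSet_tower (hT : MeasurableEmbedding T) (N : ℕ) {B : Set X}
    (hB : MeasurableSet B) : MeasurableSet (tower T N B) :=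
  Finset.measurableSet_biUnion _ fun i _ => measurableSet_image_iterate hT hB i

theorem measure_image_iterate (hT : MeasurableEmbedding T) (hTμ : MeasurePreserving T μ μ)
    {B : Set X} (hB : MeasurableSet B) (i : ℕ) : μ (T^[i] '' B) = μ B := by
  rw [← (hTμ.iterate i).measure_preimage (measurableSet_image_iterate hT hB i).nullMeasurableSet,
    preimage_image_eq _ (hT.injective.iterate i)]

theorem measure_tower (hT : MeasurableEmbedding T) (hTμ : MeasurePreserving T μ μ) {N : ℕ}
    {B : Set X} (hB : MeasurableSet B)
    (hdisj : (Icc 1 N).PairwiseDisjoint fun i => T^[i] '' B) : μ (tower T N B) = N * μ B := by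
  rw [tower, measure_biUnion_finset (by rwa [Finset.coe_Icc])
    fun i _ => measurableSet_image_iterate hT hB i]
  simp only [measure_image_iterate hT hTμ hB, Finset.sum_const, Nat.card_Icc, add_tsub_cancel_right,
    nsmul_eq_mul]

theorem measure_preimage_tower_symmDiff_le [IsProbabilityMeasure μ] (hT : MeasurableEmbedding T)
    (hTμ : MeasurePreserving T μ μ) {N : ℕ} {B : Set X} (hB : MeasurableSet B)
    (hdisj : (Icc 1 N).PairwiseDisjoint fun i => T^[i] '' B) :
    μ ((T ⁻¹' tower T N B) ∆ tower T N B) ≤ 2 * (N : ℝ≥0∞)⁻¹ := by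
  have hbase : μ B ≤ (N : ℝ≥0∞)⁻¹ := by
    rw [ENNReal.le_inv_iff_mul_le, mul_comm, ← measure_tower hT hTμ hB hdisj]
    exact prob_le_one
  calc μ ((T ⁻¹' tower T N B) ∆ tower T N B)
      ≤ μ (B ∪ T^[N] '' B) :=
        measure_mono (preimage_tower_symmDiff_tower_subset hT.injective N B)
    _ ≤ μ B + μ (T^[N] '' B) := measure_union_le _ _
    _ = 2 * μ B := by rw [measure_image_iterate hT hTμ hB, two_mul]
    _ ≤ 2 * (N : ℝ≥0∞)⁻¹ := by gcongr

theorem eventually_compl_tower_of_eventually_almostInvariantSets [IsProbabilityMeasure μ]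
    (hT : MeasurableEmbedding T) (hTμ : MeasurePreserving T μ μ) {P : Set X → Prop}
    (hP : ∀ᶠ A in almostInvariantSets T μ, P A) :
    ∀ᶠ N : ℕ in atTop, ∀ B : Set X, MeasurableSet B →
      ((Icc 1 N).PairwiseDisjoint fun i => T^[i] '' B) → P (tower T N B)ᶜ := by
  rw [almostInvariantSets, eventually_inf_principal, eventually_comap] at hP
  obtain ⟨η, hη, hPη⟩ := ENNReal.nhds_zero_basis.eventually_iff.1 hP
  have hlim : Tendsto (fun N : ℕ => 2 * (N : ℝ≥0∞)⁻¹) atTop (𝓝 0) := by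
    simpa only [mul_zero] using
      ENNReal.Tendsto.const_mul ENNReal.tendsto_inv_nat_nhds_zero (.inr ENNReal.ofNat_ne_top)
  filter_upwards [hlim.eventually_lt_const hη] with N hN B hB hdisj
  refine hPη (lt_of_le_of_lt ?_ hN) _ rfl (measurableSet_tower hT N hB).compl
  rw [preimage_compl, compl_symmDiff_compl]
  exact measure_preimage_tower_symmDiff_le hT hTμ hB hdisj

end Tower

theorem tower_complement_integral_general [NormedSpace ℝ E] [CompleteSpace E]
    [IsProbabilityMeasure μ] (hT : MeasurableEmbedding T) (hT_erg : Ergodic T μ)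
    {f : X → E} (hf : Integrable f μ) {δ : ℝ} (hδ : 0 < δ) :
    ∃ N₀ : ℕ, ∀ N ≥ N₀, ∀ B : Set X, MeasurableSet B →
      ((Icc 1 N).PairwiseDisjoint fun i => T^[i] '' B) →
      ‖∫ x in (tower T N B)ᶜ, f x ∂μ - μ.real (tower T N B)ᶜ • ∫ x, f x ∂μ‖ < δ := by
  have hsmall : ∀ᶠ A in almostInvariantSets T μ, ‖discrepancy μ A f‖ < δ :=
    (tendsto_discrepancy_almostInvariantSets hT_erg hf).norm.eventually_lt_const
      (by rwa [norm_zero])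
  exact eventually_atTop.1 <| eventually_compl_tower_of_eventually_almostInvariantSets hT
    hT_erg.toMeasurePreserving hsmall

end

/-- For an ergodic automorphism `T` and nonnegative `f₀ ∈ L¹`, if a Rokhlin–Halmos
tower `E₁ = ⨆_{i=1}^{N₁} TⁱB₁` of measure `ε₁` is tall enough (`N₁ ≥ N₀`), then the
integral of `f₀` over the complement `C₁ = X ∖ E₁` is within `δ₁` of the proportional
share `m(C₁)·∫ f₀ dm`. -/
theorem tower_complement_integral
    {X : Type*} [MeasurableSpace X] (m : Measure X) [IsProbabilityMeasure m]
    (T : X ≃ᵐ X) (hT : Ergodic (⇑T) m)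
    (f₀ : X → ℝ) (hf₀int : Integrable f₀ m) (hf₀nonneg : ∀ x, 0 ≤ f₀ x)
    (ε₁ δ₁ : ℝ) (hε₁ : 0 < ε₁) (hδ₁ : 0 < δ₁) :
    ∃ N₀ : ℕ, ∀ N₁ : ℕ, N₀ ≤ N₁ → ∀ B₁ : Set X, MeasurableSet B₁ →
      (Set.PairwiseDisjoint (Set.Icc 1 N₁) (fun i => (⇑T)^[i] '' B₁)) →
      m (⋃ i ∈ Finset.Icc 1 N₁, (⇑T)^[i] '' B₁) = ENNReal.ofReal ε₁ →
      |(∫ x, ((⋃ i ∈ Finset.Icc 1 N₁, (⇑T)^[i] '' B₁)ᶜ).indicator f₀ x ∂m)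
        - (m ((⋃ i ∈ Finset.Icc 1 N₁, (⇑T)^[i] '' B₁)ᶜ)).toReal * ∫ x, f₀ x ∂m| < δ₁ := by
  obtain ⟨N₀, hN₀⟩ := tower_complement_integral_general T.measurableEmbedding hT hf₀int hδ₁
  refine ⟨N₀, fun N hN B hB hdisj _ => ?_⟩
  change |(∫ x, (tower T N B)ᶜ.indicator f₀ x ∂m) -
    m.real (tower T N B)ᶜ * ∫ x, f₀ x ∂m| < δ₁
  rw [integral_indicator (measurableSet_tower T.measurableEmbedding N hB).compl]
  exact hN₀ N hN B hB hdisj
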